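/- arXiv:1008.2228 — 6 statements merged into one kernel-verified Lean document; each statement's English description precedes it below -/
import Mathlib

section
/- For all indices 0 ≤ i < j ≤ d, the adjacency matrices of the wreath product satisfy A_i A_j = k_i A_j. -/
open Finset Matrix

/-- Vertex set of the wreath product `K_{n 0} ≀ K_{n 1} ≀ ⋯ ≀ K_{n (d-1)}`
(paper indices `n_1, …, n_d` correspond to `n 0, …, n (d-1)`). -/
abbrev Vx (d : ℕ) (n : ℕ → ℕ) : Type := (i : Fin d) → Fin (n i)

/-- `delta x y = 0` if `x = y`; otherwise `delta x y` is the largest (1-based)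
index at which `x` and `y` differ. -/
def delta {d : ℕ} {n : ℕ → ℕ} (x y : Vx d n) : ℕ :=
  (Finset.univ.filter fun i => x i ≠ y i).sup fun i => (i : ℕ) + 1

/-- The `i`-th adjacency matrix of the wreath product: `(A i) x y = 1` iff `delta x y = i`. -/
noncomputable def A (d : ℕ) (n : ℕ → ℕ) (i : ℕ) : Matrix (Vx d n) (Vx d n) ℂ :=
  Matrix.of fun x y => if delta x y = i then 1 else 0

/-- The valencies: `k 0 = 1` and, for `1 ≤ i`, `k i = n_1 ⋯ n_{i-1} (n_i - 1)`,
i.e. `k i = n 0 ⋯ n (i-2) * (n (i-1) - 1)`. -/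
def k (n : ℕ → ℕ) (i : ℕ) : ℕ :=
  if i = 0 then 1 else (∏ j ∈ Finset.range (i - 1), n j) * (n (i - 1) - 1)

/-- The dual idempotent `E_i*` with respect to the base point `x₀`: the diagonal
0-1 matrix with `(E_i*)_{yy} = 1` iff `delta x₀ y = i`. -/
noncomputable def Es {d : ℕ} {n : ℕ → ℕ} (x₀ : Vx d n) (i : ℕ) :
    Matrix (Vx d n) (Vx d n) ℂ :=
  Matrix.of fun y z => if y = z ∧ delta x₀ y = i then 1 else 0

/-- The all-ones matrix `J`. -/
noncomputable def Jm (d : ℕ) (n : ℕ → ℕ) : Matrix (Vx d n) (Vx d n) ℂ :=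
  Matrix.of fun _ _ => 1

/-- The matrices `G i j`. -/
noncomputable def G {d : ℕ} {n : ℕ → ℕ} (x₀ : Vx d n) (i j : ℕ) :
    Matrix (Vx d n) (Vx d n) ℂ :=
  if i < j then ((k n j : ℂ))⁻¹ • (Es x₀ i * A d n j * Es x₀ j)
  else if j < i then ((k n j : ℂ))⁻¹ • (Es x₀ i * A d n i * Es x₀ j)
  else ((k n i : ℂ))⁻¹ • (Es x₀ i * Jm d n * Es x₀ i)

/-- The span `U` of the matrices `G i j`, `i, j ∈ [d]`. -/
noncomputable def Uspan {d : ℕ} {n : ℕ → ℕ} (x₀ : Vx d n) :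
    Submodule ℂ (Matrix (Vx d n) (Vx d n) ℂ) :=
  Submodule.span ℂ (Set.range fun p : Fin (d + 1) × Fin (d + 1) => G x₀ p.1 p.2)

/-- The Terwilliger algebra of the wreath product with respect to `x₀`. -/
noncomputable def Ter {d : ℕ} {n : ℕ → ℕ} (x₀ : Vx d n) :
    Subalgebra ℂ (Matrix (Vx d n) (Vx d n) ℂ) :=
  Algebra.adjoin ℂ
    ((Set.range fun i : Fin (d + 1) => A d n i) ∪ (Set.range fun i : Fin (d + 1) => Es x₀ i))

/-- The matrices `F i h`, for `1 ≤ i ≤ d` and `0 ≤ h ≤ i - 1`. -/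
noncomputable def F {d : ℕ} {n : ℕ → ℕ} (x₀ : Vx d n) (i h : ℕ) :
    Matrix (Vx d n) (Vx d n) ℂ :=
  if h < i - 1 then
    (∑ j ∈ Finset.range (h + 1), (k n j : ℂ))⁻¹ •
        (∑ j ∈ Finset.range (h + 1), Es x₀ i * A d n j * Es x₀ i)
      - (∑ j ∈ Finset.range (h + 2), (k n j : ℂ))⁻¹ •
          (∑ j ∈ Finset.range (h + 2), Es x₀ i * A d n j * Es x₀ i)
  else
    (∑ j ∈ Finset.range i, (k n j : ℂ))⁻¹ •
        (∑ j ∈ Finset.range i, Es x₀ i * A d n j * Es x₀ i)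
      - G x₀ i i

theorem delta_le_iff {d : ℕ} {n : ℕ → ℕ} (x y : Vx d n) (m : ℕ) :
    delta x y ≤ m ↔ ∀ t : Fin d, m ≤ (t : ℕ) → x t = y t := by
  unfold delta
  rw [Finset.sup_le_iff]
  simp only [Finset.mem_filter, Finset.mem_univ, true_and]
  constructor
  · intro h t ht
    by_contra hne
    have := h t hne
    omega
  · intro h t hne
    by_contra hlt
    exact hne (h t (by omega))

theorem delta_le_congr {d : ℕ} {n : ℕ → ℕ} (x z y : Vx d n) (m : ℕ) (h : delta x z ≤ m) :
    delta z y ≤ m ↔ delta x y ≤ m := by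
  rw [delta_le_iff] at *
  rw [delta_le_iff]
  constructor
  · intro g t ht
    rw [h t ht, g t ht]
  · intro g t ht
    rw [← h t ht, g t ht]

theorem card_ball {d : ℕ} {n : ℕ → ℕ} (x : Vx d n) (m : ℕ) (hm : m ≤ d) :
    (Finset.univ.filter fun z => delta x z ≤ m).card = ∏ t ∈ Finset.range m, n t := by
  have h1 : (Finset.univ.filter fun z => delta x z ≤ m) =
      Fintype.piFinset (fun t : Fin d => if (t : ℕ) < m then Finset.univ else {x t}) := by
    ext z
    simp only [Finset.mem_filter, Finset.mem_univ, true_and, Fintype.mem_piFinset, delta_le_iff]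
    refine forall_congr' fun t => ?_
    by_cases ht : (t : ℕ) < m
    · simp [ht]
    · simp [ht, Nat.le_of_not_lt ht, eq_comm]
  rw [h1, Fintype.card_piFinset]
  have h2 : ∀ t : Fin d, (if (t : ℕ) < m then (Finset.univ : Finset (Fin (n t))) else {x t}).card
      = (fun s : ℕ => if s < m then n s else 1) t := by
    intro t
    by_cases ht : (t : ℕ) < m <;> simp [ht]
  rw [Finset.prod_congr rfl fun t _ => h2 t, Fin.prod_univ_eq_prod_range (fun s : ℕ => if s < m then n s else 1) d,
    Finset.prod_ite]
  simp only [Finset.prod_const_one, mul_one]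
  congr 1
  ext s
  simp
  omega

theorem card_sphere {d : ℕ} {n : ℕ → ℕ} (x : Vx d n) (i : ℕ) (hi : i ≤ d) :
    (Finset.univ.filter fun z => delta x z = i).card = k n i := by
  rcases i with _ | m
  · have := card_ball x 0 hi
    simpa [k] using this
  · have h1 := card_ball x (m + 1) hi
    have h2 := card_ball x m (by omega)
    have h3 : (Finset.univ.filter fun z => delta x z ≤ m + 1) =
        (Finset.univ.filter fun z => delta x z ≤ m) ∪
        (Finset.univ.filter fun z => delta x z = m + 1) := by
      ext z
      simp
      omega
    rw [h3, Finset.card_union_of_disjoint, h2, Finset.prod_range_succ] at h1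
    · simp only [k, Nat.add_sub_cancel, Nat.succ_ne_zero, if_false, Nat.mul_sub, mul_one]
      omega
    · rw [Finset.disjoint_left]
      intro z
      simp
      omega

/-- `A i * A j = k i • A j` for `0 ≤ i < j ≤ d`. -/
theorem stmt1 (d : ℕ) (hd : 1 ≤ d) (n : ℕ → ℕ) (hn : ∀ i < d, 2 ≤ n i)
    (i j : ℕ) (hij : i < j) (hj : j ≤ d) :
    A d n i * A d n j = (k n i : ℂ) • A d n j := by
  ext x y
  obtain ⟨m, rfl⟩ : ∃ m, j = m + 1 := ⟨j - 1, by omega⟩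
  have key : ∀ z : Vx d n, (A d n i) x z * (A d n (m + 1)) z y =
      (if delta x z = i then 1 else 0) * (A d n (m + 1)) x y := by
    intro z
    simp only [A, Matrix.of_apply]
    by_cases hz : delta x z = i
    · have e1 := delta_le_congr x z y m (by omega)
      have e2 := delta_le_congr x z y (m + 1) (by omega)
      have : delta z y = m + 1 ↔ delta x y = m + 1 := by omega
      simp [this]
    · simp [hz]
  rw [Matrix.mul_apply, Finset.sum_congr rfl fun z _ => key z, ← Finset.sum_mul,
    Finset.sum_boole, card_sphere x i (by omega), Matrix.smul_apply, smul_eq_mul]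
end

section
/- For every i ∈ {0,1,…,d}, the ℂ-linear span of {A_0, A_1, …, A_i} is closed under matrix multiplication, i.e., for all g, h ∈ {0,…,i} the product A_g A_h is a ℂ-linear combination of A_0, A_1, …, A_i. (Equivalently, {R_0, R_1, …, R_i} is a closed subset and ⟨A_0,…,A_i⟩ is a Bose-Mesner subalgebra of the Bose-Mesner algebra of the wreath product.) -/
open Finset Matrix

lemma delta_le {d : ℕ} {n : ℕ → ℕ} (x y : Vx d n) (g : ℕ) :
    delta x y ≤ g ↔ ∀ i : Fin d, g ≤ i → x i = y i := by
  unfold delta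
  rw [Finset.sup_le_iff]
  constructor
  · intro H i hi
    by_contra hne
    have := H i (by simp [hne])
    omega
  · intro H i hi
    by_contra hlt
    exact (Finset.mem_filter.1 hi).2 (H i (by omega))

lemma delta_le_symm {d : ℕ} {n : ℕ → ℕ} (x y : Vx d n) (g : ℕ) :
    delta x y ≤ g ↔ delta y x ≤ g := by
  simp only [delta_le, eq_comm]

lemma delta_le_trans {d : ℕ} {n : ℕ → ℕ} {x y z : Vx d n} {g : ℕ}
    (h1 : delta x y ≤ g) (h2 : delta y z ≤ g) : delta x z ≤ g := by
  rw [delta_le] at *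
  intro i hi
  rw [h1 i hi, h2 i hi]

/-- indicator of distance at most `g` -/
noncomputable def Bm (d : ℕ) (n : ℕ → ℕ) (g : ℕ) : Matrix (Vx d n) (Vx d n) ℂ :=
  Matrix.of fun x y => if delta x y ≤ g then 1 else 0

lemma Bm_eq (d : ℕ) (n : ℕ → ℕ) (g : ℕ) :
    Bm d n g = ∑ j ∈ Finset.range (g + 1), A d n j := by
  ext x y
  simp [Bm, A, Matrix.sum_apply, Nat.lt_succ_iff]

lemma Bm_rowsum (d : ℕ) (n : ℕ → ℕ) (g : ℕ) (x x' : Vx d n) :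
    ∑ z, Bm d n g x z = ∑ z, Bm d n g x' z := by
  refine Fintype.sum_equiv (Equiv.piCongrRight fun i => Equiv.swap (x i) (x' i)) _ _ ?_
  intro z
  have : delta x z ≤ g ↔
      delta x' ((Equiv.piCongrRight fun i => Equiv.swap (x i) (x' i)) z) ≤ g := by
    rw [delta_le, delta_le]
    refine forall_congr' fun i => imp_congr_right fun _ => ?_
    have h2 : x' i = Equiv.swap (x i) (x' i) (x i) := by simp
    simp only [Equiv.piCongrRight_apply, Pi.map_apply]
    constructor
    · intro e
      rw [← e]; exact h2
    · intro e
      exact (Equiv.swap (x i) (x' i)).injective (h2.symm.trans e)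
  simp only [Bm, Matrix.of_apply, this]

lemma Bm_comm (d : ℕ) (n : ℕ → ℕ) (g : ℕ) (x y : Vx d n) : Bm d n g x y = Bm d n g y x := by
  simp only [Bm, Matrix.of_apply, delta_le_symm x y]

lemma Bm_mul (d : ℕ) (n : ℕ → ℕ) (g h : ℕ) (hgh : g ≤ h) :
    ∃ c : ℂ, Bm d n g * Bm d n h = c • Bm d n h ∧ Bm d n h * Bm d n g = c • Bm d n h := by
  have key : ∃ c : ℂ, Bm d n g * Bm d n h = c • Bm d n h := by
    by_cases hne : Nonempty (Vx d n)
    · obtain ⟨x₀⟩ := hne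
      refine ⟨∑ z, Bm d n g x₀ z, ?_⟩
      ext x y
      rw [Matrix.smul_apply, Bm_rowsum d n g x₀ x, Matrix.mul_apply, smul_eq_mul, Finset.sum_mul]
      refine Finset.sum_congr rfl fun z _ => ?_
      by_cases hz : delta x z ≤ g
      · have h1 : delta x z ≤ h := hz.trans hgh
        have : delta z y ≤ h ↔ delta x y ≤ h :=
          ⟨fun e => delta_le_trans h1 e, fun e => delta_le_trans ((delta_le_symm _ _ _).1 h1) e⟩
        simp only [Bm, Matrix.of_apply, this]
      · simp [Bm, hz]
    · exact ⟨0, by ext x; exact (hne ⟨x⟩).elim⟩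
  obtain ⟨c, hc⟩ := key
  have tr : ∀ g, (Bm d n g)ᵀ = Bm d n g := fun g => by
    ext x y; exact Bm_comm d n g y x
  refine ⟨c, hc, ?_⟩
  have := congrArg Matrix.transpose hc
  rwa [Matrix.transpose_mul, Matrix.transpose_smul, tr, tr] at this

lemma A_mem (d : ℕ) (n : ℕ → ℕ) (i g : ℕ) (hg : g ≤ i) :
    A d n g ∈ Submodule.span ℂ (Set.range fun j : Fin (i + 1) => Bm d n (j : ℕ)) := by
  have hB : ∀ j ≤ i, Bm d n j ∈
      Submodule.span ℂ (Set.range fun j : Fin (i + 1) => Bm d n (j : ℕ)) :=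
    fun j hj => Submodule.subset_span ⟨⟨j, by omega⟩, rfl⟩
  cases g with
  | zero =>
    have : A d n 0 = Bm d n 0 := by simp [Bm_eq]
    rw [this]; exact hB 0 hg
  | succ g =>
    have : A d n (g + 1) = Bm d n (g + 1) - Bm d n g := by
      rw [Bm_eq, Bm_eq, Finset.sum_range_succ _ (g + 1)]; simp
    rw [this]
    exact Submodule.sub_mem _ (hB _ hg) (hB _ (by omega))

/-- for every `i ∈ [d]`, the span of `A 0, …, A i` is closed under
multiplication: `A g * A h` is a linear combination of `A 0, …, A i` for `g, h ≤ i`. -/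
theorem stmt3 (d : ℕ) (hd : 1 ≤ d) (n : ℕ → ℕ) (hn : ∀ i < d, 2 ≤ n i)
    (i : ℕ) (hi : i ≤ d) (g h : ℕ) (hg : g ≤ i) (hh : h ≤ i) :
    A d n g * A d n h ∈
      Submodule.span ℂ (Set.range fun j : Fin (i + 1) => A d n (j : ℕ)) := by
  set S := Submodule.span ℂ (Set.range fun j : Fin (i + 1) => A d n (j : ℕ)) with hS
  have hB : ∀ j ≤ i, Bm d n j ∈ S := by
    intro j hj
    rw [Bm_eq]
    refine Submodule.sum_mem _ fun l hl => Submodule.subset_span ⟨⟨l, ?_⟩, rfl⟩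
    have := Finset.mem_range.1 hl
    omega
  have hm := Submodule.mul_mem_mul (A_mem d n i g hg) (A_mem d n i h hh)
  rw [Submodule.span_mul_span] at hm
  refine (Submodule.span_le.2 ?_) hm
  rintro _ ⟨_, ⟨a, rfl⟩, _, ⟨b, rfl⟩, rfl⟩
  have ha := a.2
  have hb := b.2
  show Bm d n a * Bm d n b ∈ S
  rcases le_total (a : ℕ) b with hab | hab
  · obtain ⟨c, hc, -⟩ := Bm_mul d n a b hab
    rw [hc]; exact S.smul_mem _ (hB _ (by omega))
  · obtain ⟨c, -, hc⟩ := Bm_mul d n b a hab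
    rw [hc]; exact S.smul_mem _ (hB _ (by omega))
end

section
/- The matrices {G_{ij} : i, j ∈ [d]} are linearly independent, their span U is closed under matrix multiplication, and the ℂ-linear map U → M_{d+1}(ℂ) sending G_{ij} to the matrix unit E_{ij} (the (d+1)×(d+1) matrix with 1 in position (i,j) and 0 elsewhere) is an isomorphism of ℂ-algebras; in particular U ≅ M_{d+1}(ℂ) and dim U = (d+1)². -/
open Finset Matrix

namespace Stmt4Aux

lemma delta_le_iff {d : ℕ} {n : ℕ → ℕ} (x y : Vx d n) (m : ℕ) :
    delta x y ≤ m ↔ ∀ j : Fin d, m ≤ j → x j = y j := by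
  unfold delta
  rw [Finset.sup_le_iff]
  constructor
  · intro h j hj
    by_contra hne
    have := h j (by simp [hne])
    omega
  · intro h j hj
    by_contra hlt
    have h1 := h j (by omega)
    simp [h1] at hj

lemma delta_le {d : ℕ} {n : ℕ → ℕ} (x y : Vx d n) : delta x y ≤ d := by
  rw [delta_le_iff]
  intro j hj
  have := j.2
  omega

lemma delta_comm {d : ℕ} {n : ℕ → ℕ} (x y : Vx d n) : delta x y = delta y x := by
  unfold delta
  simp only [ne_comm]

lemma delta_tri {d : ℕ} {n : ℕ → ℕ} (x y z : Vx d n) (m : ℕ)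
    (h1 : delta x y ≤ m) (h2 : delta y z ≤ m) : delta x z ≤ m := by
  rw [delta_le_iff] at *
  intro j hj
  rw [h1 j hj, h2 j hj]

/-- isosceles property -/
lemma delta_iso {d : ℕ} {n : ℕ → ℕ} (x y z : Vx d n) (h : delta x y < delta x z) :
    delta y z = delta x z := by
  apply le_antisymm
  · exact delta_tri y x z _ (by rw [delta_comm]; exact h.le) le_rfl
  · by_contra hlt
    push Not at hlt
    have := delta_tri x y z (max (delta x y) (delta y z)) (le_max_left _ _) (le_max_right _ _)
    have h2 := max_lt h hlt
    omega

lemma card_le {d : ℕ} {n : ℕ → ℕ} (x : Vx d n) (m : ℕ) (hm : m ≤ d) :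
    (Finset.univ.filter fun y => delta x y ≤ m).card = ∏ j ∈ Finset.range m, n j := by
  have h : (Finset.univ.filter fun y => delta x y ≤ m)
      = Fintype.piFinset (fun j : Fin d => if (j : ℕ) < m then Finset.univ else {x j}) := by
    ext y
    simp only [Finset.mem_filter, Finset.mem_univ, true_and, Fintype.mem_piFinset, delta_le_iff]
    refine forall_congr' fun j => ?_
    by_cases hj : (j : ℕ) < m
    · simp [hj]
    · simp [hj, not_lt.mp hj, eq_comm]
  rw [h, Fintype.card_piFinset]
  have h2 : ∀ j : Fin d, (if (j : ℕ) < m then (Finset.univ : Finset (Fin (n j))) else {x j}).card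
      = (fun j : ℕ => if j < m then n j else 1) j := by
    intro j
    by_cases hj : (j : ℕ) < m <;> simp [hj]
  rw [Finset.prod_congr rfl (fun j _ => h2 j),
    Fin.prod_univ_eq_prod_range (fun j : ℕ => if j < m then n j else 1) d, ← Finset.prod_filter]
  congr 1
  ext j
  simp
  omega

lemma card_eq {d : ℕ} {n : ℕ → ℕ} (x : Vx d n) (m : ℕ) (hm : m ≤ d) :
    (Finset.univ.filter fun y => delta x y = m).card = k n m := by
  rcases m with _ | m
  · have := card_le x 0 (by omega)
    simpa [k] using this
  · have h1 := card_le x m (by omega)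
    have h2 := card_le x (m + 1) hm
    have h3 : (Finset.univ.filter fun y => delta x y ≤ m + 1)
        = (Finset.univ.filter fun y => delta x y ≤ m) ∪
          (Finset.univ.filter fun y => delta x y = m + 1) := by
      ext y
      simp
      omega
    rw [h3, Finset.card_union_of_disjoint, h1, Finset.prod_range_succ] at h2
    · simp only [k, Nat.add_one_ne_zero, if_false, Nat.add_sub_cancel, Nat.mul_sub, mul_one]
      omega
    · rw [Finset.disjoint_filter]
      intro y _ h
      omega

lemma k_pos {d : ℕ} {n : ℕ → ℕ} (hn : ∀ i < d, 2 ≤ n i) (m : ℕ) (hm : m ≤ d) : 0 < k n m := by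
  unfold k
  split_ifs with h
  · exact one_pos
  · apply Nat.mul_pos
    · apply Finset.prod_pos
      intro j hj
      have := hn j (by simp at hj; omega)
      omega
    · have := hn (m - 1) (by omega)
      omega

lemma G_apply {d : ℕ} {n : ℕ → ℕ} (x₀ : Vx d n) (i j : ℕ) (y z : Vx d n) :
    G x₀ i j y z = if delta x₀ y = i ∧ delta x₀ z = j then ((k n j : ℂ))⁻¹ else 0 := by
  have key : ∀ (M : Matrix (Vx d n) (Vx d n) ℂ) (a b : ℕ), (Es x₀ a * M * Es x₀ b) y z
      = if delta x₀ y = a ∧ delta x₀ z = b then M y z else 0 := by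
    intro M a b
    have e : ∀ a, Es x₀ a = Matrix.diagonal (fun y => if delta x₀ y = a then (1 : ℂ) else 0) := by
      intro a
      ext u v
      simp only [Es, Matrix.of_apply, Matrix.diagonal_apply]
      split_ifs <;> simp_all
    rw [e, e, Matrix.mul_diagonal, Matrix.diagonal_mul]
    split_ifs <;> simp_all
  unfold G
  rcases lt_trichotomy i j with h1 | h3 | h3 <;> [rw [if_pos h1]; rw [if_neg h3.not_lt, if_neg h3.not_gt]; rw [if_neg h3.not_gt, if_pos h3]] <;> split_ifs with h2
  · rw [Matrix.smul_apply, key, if_pos h2, A, Matrix.of_apply, if_pos]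
    · simp
    · obtain ⟨rfl, rfl⟩ := h2
      exact delta_iso _ _ _ h1
  · rw [Matrix.smul_apply, key, if_neg h2]
    simp
  · obtain rfl : i = j := h3
    rw [Matrix.smul_apply, key, if_pos h2]
    simp [Jm]
  · obtain rfl : i = j := h3
    rw [Matrix.smul_apply, key, if_neg h2]
    simp
  · rw [Matrix.smul_apply, key, if_pos h2, A, Matrix.of_apply, if_pos]
    · simp
    · obtain ⟨rfl, rfl⟩ := h2
      rw [delta_comm]
      exact delta_iso _ _ _ h3
  · rw [Matrix.smul_apply, key, if_neg h2]
    simp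

/-- level function -/
def lev {d : ℕ} {n : ℕ → ℕ} (x₀ : Vx d n) (y : Vx d n) : Fin (d + 1) :=
  ⟨delta x₀ y, Nat.lt_succ_of_le (delta_le _ _)⟩

/-- the inverse isomorphism, as a map into all matrices -/
noncomputable def psi {d : ℕ} {n : ℕ → ℕ} (x₀ : Vx d n) :
    Matrix (Fin (d + 1)) (Fin (d + 1)) ℂ →ₗ[ℂ] Matrix (Vx d n) (Vx d n) ℂ where
  toFun M := Matrix.of fun y z => M (lev x₀ y) (lev x₀ z) * ((k n (lev x₀ z) : ℂ))⁻¹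
  map_add' M N := by
    ext y z
    simp [add_mul]
  map_smul' c M := by
    ext y z
    simp [mul_assoc]

lemma psi_single {d : ℕ} {n : ℕ → ℕ} (x₀ : Vx d n) (i j : Fin (d + 1)) :
    psi x₀ (Matrix.single i j 1) = G x₀ i j := by
  ext y z
  rw [G_apply]
  simp only [psi, LinearMap.coe_mk, AddHom.coe_mk, Matrix.of_apply, Matrix.single_apply]
  have h : ∀ (i : Fin (d + 1)) (y : Vx d n), i = lev x₀ y ↔ delta x₀ y = i := by
    intro i y
    rw [Fin.ext_iff, eq_comm]
    rfl
  simp only [h]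
  split_ifs with h1
  · rw [one_mul, ← h1.2]
    rfl
  · simp

lemma card_lev {d : ℕ} {n : ℕ → ℕ} (x₀ : Vx d n) (i : Fin (d + 1)) :
    (Finset.univ.filter fun y => lev x₀ y = i).card = k n i := by
  rw [← card_eq x₀ i (Nat.le_of_lt_succ i.2)]
  congr 1
  ext y
  simp [lev, Fin.ext_iff]

lemma psi_mul {d : ℕ} {n : ℕ → ℕ} (hn : ∀ i < d, 2 ≤ n i) (x₀ : Vx d n)
    (M N : Matrix (Fin (d + 1)) (Fin (d + 1)) ℂ) :
    psi x₀ (M * N) = psi x₀ M * psi x₀ N := by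
  ext y z
  simp only [psi, LinearMap.coe_mk, AddHom.coe_mk, Matrix.of_apply, Matrix.mul_apply]
  rw [← Finset.sum_fiberwise Finset.univ (lev x₀), Finset.sum_mul]
  refine Finset.sum_congr rfl fun j _ => ?_
  rw [Finset.sum_congr rfl (g := fun _ => M (lev x₀ y) j * ((k n j : ℂ))⁻¹ *
    (N j (lev x₀ z) * ((k n (lev x₀ z) : ℂ))⁻¹))]
  · rw [Finset.sum_const, card_lev, nsmul_eq_mul]
    have : (k n j : ℂ) ≠ 0 := by
      exact_mod_cast (k_pos hn j (Nat.le_of_lt_succ j.2)).ne'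
    field_simp
  · intro w hw
    rw [(Finset.mem_filter.mp hw).2]

lemma psi_inj {d : ℕ} {n : ℕ → ℕ} (hn : ∀ i < d, 2 ≤ n i) (x₀ : Vx d n) :
    Function.Injective (psi x₀) := by
  intro M N h
  have surj : ∀ i, ∃ y, lev x₀ y = i := by
    intro i
    have h1 := k_pos hn i (Nat.le_of_lt_succ i.2)
    rw [← card_lev x₀ i, Finset.card_pos] at h1
    obtain ⟨y, hy⟩ := h1
    exact ⟨y, (Finset.mem_filter.mp hy).2⟩
  ext i j
  obtain ⟨y, rfl⟩ := surj i
  obtain ⟨z, rfl⟩ := surj j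
  have h2 := congrFun (congrFun h y) z
  simp only [psi, LinearMap.coe_mk, AddHom.coe_mk, Matrix.of_apply] at h2
  have : (k n (lev x₀ z) : ℂ) ≠ 0 := by
    exact_mod_cast (k_pos hn _ (Nat.le_of_lt_succ (lev x₀ z).2)).ne'
  exact mul_right_cancel₀ (inv_ne_zero this) h2

lemma G_eq {d : ℕ} {n : ℕ → ℕ} (x₀ : Vx d n) :
    (fun p : Fin (d + 1) × Fin (d + 1) => G x₀ (p.1 : ℕ) (p.2 : ℕ))
      = psi x₀ ∘ (Matrix.stdBasis ℂ (Fin (d + 1)) (Fin (d + 1))) := by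
  funext p
  rw [Function.comp_apply, Matrix.stdBasis_eq_single, psi_single]

lemma range_psi {d : ℕ} {n : ℕ → ℕ} (x₀ : Vx d n) :
    LinearMap.range (psi x₀) = Uspan x₀ := by
  unfold Uspan
  rw [G_eq, Set.range_comp, Submodule.span_image, Module.Basis.span_eq, Submodule.map_top]

end Stmt4Aux

open Stmt4Aux in
/-- the `G i j` (`i, j ∈ [d]`) are linearly independent, their span `U` is
closed under matrix multiplication, and the linear map `U → M_{d+1}(ℂ)` sending `G i j`
to the matrix unit `E_{ij}` is an algebra isomorphism; in particular `U ≅ M_{d+1}(ℂ)`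
and `dim U = (d+1)²`. -/
theorem stmt4 (d : ℕ) (hd : 1 ≤ d) (n : ℕ → ℕ) (hn : ∀ i < d, 2 ≤ n i)
    (x₀ : Vx d n) :
    LinearIndependent ℂ (fun p : Fin (d + 1) × Fin (d + 1) => G x₀ (p.1 : ℕ) (p.2 : ℕ)) ∧
    (∀ u ∈ Uspan x₀, ∀ v ∈ Uspan x₀, u * v ∈ Uspan x₀) ∧
    ∃ e : Uspan x₀ ≃ₗ[ℂ] Matrix (Fin (d + 1)) (Fin (d + 1)) ℂ,
      (∀ (i j : Fin (d + 1)) (hmem : G x₀ (i : ℕ) (j : ℕ) ∈ Uspan x₀),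
        e ⟨G x₀ (i : ℕ) (j : ℕ), hmem⟩ = Matrix.single i j 1) ∧
      (∀ (u v : Uspan x₀)
          (hmem : (u : Matrix (Vx d n) (Vx d n) ℂ) * (v : Matrix (Vx d n) (Vx d n) ℂ) ∈ Uspan x₀),
        e ⟨(u : Matrix (Vx d n) (Vx d n) ℂ) * (v : Matrix (Vx d n) (Vx d n) ℂ), hmem⟩
          = e u * e v) ∧
    Module.finrank ℂ (Uspan x₀) = (d + 1) ^ 2 := by
  have hinj := psi_inj hn x₀
  let e0 : Matrix (Fin (d + 1)) (Fin (d + 1)) ℂ ≃ₗ[ℂ] Uspan x₀ :=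
    (LinearEquiv.ofInjective (psi x₀) hinj).trans (LinearEquiv.ofEq _ _ (range_psi x₀))
  have he0 : ∀ M, ((e0 M : Uspan x₀) : Matrix (Vx d n) (Vx d n) ℂ) = psi x₀ M := fun M => rfl
  refine ⟨?_, ?_, e0.symm, ?_, ?_, ?_⟩
  · rw [G_eq]
    exact (Matrix.stdBasis ℂ (Fin (d + 1)) (Fin (d + 1))).linearIndependent.map'
      (psi x₀) (LinearMap.ker_eq_bot.mpr hinj)
  · rw [← range_psi]
    rintro _ ⟨M, rfl⟩ _ ⟨N, rfl⟩
    exact ⟨M * N, psi_mul hn x₀ M N⟩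
  · intro i j hmem
    rw [LinearEquiv.symm_apply_eq]
    apply Subtype.ext
    rw [he0, psi_single]
  · intro u v hmem
    rw [LinearEquiv.symm_apply_eq]
    apply Subtype.ext
    rw [he0, psi_mul hn, ← he0, ← he0, LinearEquiv.apply_symm_apply, LinearEquiv.apply_symm_apply]
  · rw [← LinearEquiv.finrank_eq e0, Module.finrank_matrix]
    simp [sq]
end

section
/- U is a two-sided ideal of the Terwilliger algebra T(x₀): for every T ∈ T(x₀) and every u ∈ U, both T u ∈ U and u T ∈ U. Moreover the quotient algebra T(x₀)/U is commutative, i.e., S T − T S ∈ U for all S, T ∈ T(x₀). -/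
open Finset Matrix

section aux
variable {d : ℕ} {n : ℕ → ℕ}

lemma delta_lt_iff (x y : Vx d n) (j : ℕ) :
    delta x y < j + 1 ↔ ∀ i : Fin d, j ≤ (i : ℕ) → x i = y i := by
  unfold delta
  rw [Nat.lt_succ_iff, Finset.sup_le_iff]
  constructor
  · intro h i hi
    by_contra hne
    have := h i (by simpa using hne)
    omega
  · intro h i hi
    by_contra hlt
    have h1 : x i ≠ y i := by simpa using hi
    exact h1 (h i (by omega))

lemma delta_comm (x y : Vx d n) : delta x y = delta y x := by
  unfold delta
  simp only [ne_comm]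

lemma delta_le_s5 (x y : Vx d n) : delta x y < d + 1 := by
  rw [delta_lt_iff]
  intro i hi
  have := i.2
  omega

lemma delta_tri (x y z : Vx d n) (j : ℕ) (h1 : delta x y < j) (h2 : delta y z < j) :
    delta x z < j := by
  obtain _ | j := j
  · omega
  rw [delta_lt_iff] at *
  intro i hi
  rw [h1 i hi, h2 i hi]

lemma delta_max (x y z : Vx d n) (h : delta x y ≠ delta x z) :
    delta y z = max (delta x y) (delta x z) := by
  have c1 := delta_comm x y
  have c2 := delta_comm y z
  have c3 := delta_comm x z
  have t1 := delta_tri y x z (max (delta x y) (delta x z) + 1) (by omega) (by omega)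
  rcases lt_or_gt_of_ne h with h | h
  · by_contra hne
    have := delta_tri x y z (delta x z) (by omega) (by omega)
    omega
  · by_contra hne
    have := delta_tri x z y (delta x y) (by omega) (by omega)
    omega

/-- coordinatewise swap -/
def sw (y z : Vx d n) : Vx d n ≃ Vx d n :=
  Equiv.piCongrRight fun m => Equiv.swap (y m) (z m)

lemma sw_left (y z : Vx d n) : sw y z y = z := by
  funext m; simp [sw]

lemma sw_right (y z : Vx d n) : sw y z z = y := by
  funext m; simp [sw]

lemma delta_sw (y z a b : Vx d n) : delta (sw y z a) (sw y z b) = delta a b := by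
  unfold delta
  simp [sw]

lemma A_comm (i j : ℕ) : A d n i * A d n j = A d n j * A d n i := by
  ext y z
  simp only [Matrix.mul_apply, A, Matrix.of_apply]
  rw [← Equiv.sum_comp (sw y z)]
  refine Finset.sum_congr rfl fun w _ => ?_
  have h1 : delta y (sw y z w) = delta w z := by
    have := delta_sw y z z w
    rw [sw_right] at this
    rw [this, delta_comm]
  have h2 : delta (sw y z w) z = delta y w := by
    have := delta_sw y z w y
    rw [sw_left] at this
    rw [this, delta_comm]
  rw [h1, h2, mul_comm]

def IsU (x₀ : Vx d n) (M : Matrix (Vx d n) (Vx d n) ℂ) : Prop :=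
  ∀ y y' z z', delta x₀ y = delta x₀ y' → delta x₀ z = delta x₀ z' → M y z = M y' z'

lemma Es_mul (x₀ : Vx d n) (i : ℕ) (M : Matrix (Vx d n) (Vx d n) ℂ) (y z : Vx d n) :
    (Es x₀ i * M) y z = if delta x₀ y = i then M y z else 0 := by
  simp only [Matrix.mul_apply, Es, Matrix.of_apply]
  rw [Finset.sum_eq_single y]
  · simp
  · intro b _ hb
    simp [hb.symm]
  · simp

lemma mul_Es (x₀ : Vx d n) (i : ℕ) (M : Matrix (Vx d n) (Vx d n) ℂ) (y z : Vx d n) :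
    (M * Es x₀ i) y z = if delta x₀ z = i then M y z else 0 := by
  simp only [Matrix.mul_apply, Es, Matrix.of_apply]
  rw [Finset.sum_eq_single z]
  · simp
  · intro b _ hb
    simp [hb]
  · simp

lemma G_apply (x₀ : Vx d n) (i j : ℕ) (y z : Vx d n) :
    G x₀ i j y z = (k n j : ℂ)⁻¹ * if delta x₀ y = i ∧ delta x₀ z = j then 1 else 0 := by
  have hm := delta_max x₀ y z
  unfold G
  split_ifs with h1 h2 h3 h3 h3 <;>
    simp only [Matrix.smul_apply, mul_Es, Es_mul, smul_eq_mul, A, Jm, Matrix.of_apply] <;>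
    congr 1 <;> grind

lemma IsU_of_mem (x₀ : Vx d n) (M : Matrix (Vx d n) (Vx d n) ℂ) (h : M ∈ Uspan x₀) :
    IsU x₀ M := by
  unfold Uspan at h
  induction h using Submodule.span_induction with
  | mem x hx =>
    obtain ⟨p, rfl⟩ := hx
    intro y y' z z' h1 h2
    simp only [G_apply, h1, h2]
  | zero => intro y y' z z' _ _; rfl
  | add a b _ _ ha hb =>
    intro y y' z z' h1 h2
    simp only [Matrix.add_apply, ha y y' z z' h1 h2, hb y y' z z' h1 h2]
  | smul c a _ ha =>
    intro y y' z z' h1 h2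
    simp only [Matrix.smul_apply, ha y y' z z' h1 h2]

lemma k_ne (hn : ∀ i < d, 2 ≤ n i) (j : ℕ) (hj : j < d + 1) : (k n j : ℂ) ≠ 0 := by
  rw [Nat.cast_ne_zero]
  unfold k
  split_ifs with h
  · simp
  · refine mul_ne_zero (Finset.prod_ne_zero_iff.2 fun i hi => ?_) ?_
    · have := hn i (by have := Finset.mem_range.1 hi; omega)
      omega
    · have := hn (j - 1) (by omega)
      omega

open Classical in
lemma mem_of_IsU (hn : ∀ i < d, 2 ≤ n i) (x₀ : Vx d n) (M : Matrix (Vx d n) (Vx d n) ℂ)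
    (h : IsU x₀ M) : M ∈ Uspan x₀ := by
  let c : Fin (d + 1) × Fin (d + 1) → ℂ := fun p =>
    if hp : ∃ q : Vx d n × Vx d n, delta x₀ q.1 = p.1 ∧ delta x₀ q.2 = p.2 then
      M hp.choose.1 hp.choose.2 else 0
  have key : M = ∑ p : Fin (d + 1) × Fin (d + 1), (c p * (k n p.2 : ℂ)) • G x₀ p.1 p.2 := by
    ext y z
    rw [Matrix.sum_apply]
    rw [Finset.sum_eq_single (⟨delta x₀ y, delta_le_s5 _ _⟩, ⟨delta x₀ z, delta_le_s5 _ _⟩)]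
    · have hk := k_ne hn (delta x₀ z) (delta_le_s5 _ _)
      have hp : ∃ q : Vx d n × Vx d n, delta x₀ q.1 = delta x₀ y ∧ delta x₀ q.2 = delta x₀ z :=
        ⟨(y, z), rfl, rfl⟩
      have hc : c (⟨delta x₀ y, delta_le_s5 _ _⟩, ⟨delta x₀ z, delta_le_s5 _ _⟩) = M y z := by
        simp only [c]
        rw [dif_pos hp]
        exact h _ _ _ _ hp.choose_spec.1 hp.choose_spec.2
      rw [hc]
      simp only [Matrix.smul_apply, G_apply, smul_eq_mul]
      simp [hk]
    · rintro ⟨i, j⟩ _ hb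
      simp only [Matrix.smul_apply, G_apply, smul_eq_mul]
      rw [if_neg]
      · simp
      · rintro ⟨h1, h2⟩
        exact hb (by ext <;> simp [h1, h2])
    · simp
  rw [key]
  exact Submodule.sum_mem _ fun p _ => Submodule.smul_mem _ _ (Submodule.subset_span ⟨p, rfl⟩)

lemma ball_sum (x₀ y y' : Vx d n) (g : Vx d n → ℂ)
    (hg : ∀ z z', delta x₀ z = delta x₀ z' → g z = g z') (h : delta x₀ y = delta x₀ y') (j : ℕ) :
    ∑ z, (if delta y z < j then g z else 0) = ∑ z, (if delta y' z < j then g z else 0) := by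
  by_cases hj : delta x₀ y < j
  · refine Finset.sum_congr rfl fun z _ => ?_
    have h0 := delta_comm x₀ y
    have h0' := delta_comm x₀ y'
    have e1 : delta y z < j ↔ delta x₀ z < j :=
      ⟨fun hh => delta_tri x₀ y z j hj hh, fun hh => delta_tri y x₀ z j (by omega) hh⟩
    have e2 : delta y' z < j ↔ delta x₀ z < j :=
      ⟨fun hh => delta_tri x₀ y' z j (by omega) hh, fun hh => delta_tri y' x₀ z j (by omega) hh⟩
    simp only [e1, e2]
  · have aux : ∀ w : Vx d n, delta x₀ w = delta x₀ y → ∀ z, delta w z < j → g z = g y := by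
      intro w hw z hz
      apply hg
      by_contra hne
      have := delta_max x₀ w z (by omega)
      omega
    rw [← Equiv.sum_comp (sw y y')]
    refine Finset.sum_congr rfl fun z _ => ?_
    have h1 : delta y (sw y y' z) = delta y' z := by
      have := delta_sw y y' y' z
      rwa [sw_right] at this
    rw [h1]
    split_ifs with hz
    · rw [aux y rfl (sw y y' z) (by omega), aux y' h.symm z hz]
    · rfl

lemma A_mul_IsU (x₀ : Vx d n) (j : ℕ) (M : Matrix (Vx d n) (Vx d n) ℂ) (h : IsU x₀ M) :
    IsU x₀ (A d n j * M) := by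
  have e : ∀ y z, (A d n j * M) y z = ∑ w, (if delta y w < j + 1 then M w z else 0)
      - ∑ w, (if delta y w < j then M w z else 0) := by
    intro y z
    rw [← Finset.sum_sub_distrib]
    simp only [Matrix.mul_apply, A, Matrix.of_apply]
    refine Finset.sum_congr rfl fun w _ => ?_
    rcases lt_trichotomy (delta y w) j with hh | hh | hh
    · simp [hh, hh.ne, hh.trans (Nat.lt_succ_self j)]
    · simp [hh]
    · rw [if_neg (by omega), if_neg (by omega), if_neg (by omega)]; simp
  intro y y' z z' h1 h2
  have e0 : ∀ w, M w z = M w z' := fun w => h _ _ _ _ rfl h2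
  rw [e, e]
  simp only [e0]
  rw [ball_sum x₀ y y' (fun w => M w z') (fun a b hab => h _ _ _ _ hab rfl) h1,
    ball_sum x₀ y y' (fun w => M w z') (fun a b hab => h _ _ _ _ hab rfl) h1]

lemma IsU_transpose (x₀ : Vx d n) (M : Matrix (Vx d n) (Vx d n) ℂ) (h : IsU x₀ M) :
    IsU x₀ Mᵀ := fun _ _ _ _ h1 h2 => h _ _ _ _ h2 h1

lemma A_transpose (j : ℕ) : (A d n j)ᵀ = A d n j := by
  ext y z
  simp [A, delta_comm]

lemma mul_A_IsU (x₀ : Vx d n) (j : ℕ) (M : Matrix (Vx d n) (Vx d n) ℂ) (h : IsU x₀ M) :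
    IsU x₀ (M * A d n j) := by
  have := IsU_transpose _ _ (A_mul_IsU x₀ j _ (IsU_transpose _ _ h))
  rwa [Matrix.transpose_mul, Matrix.transpose_transpose, A_transpose] at this

lemma Es_mul_IsU (x₀ : Vx d n) (j : ℕ) (M : Matrix (Vx d n) (Vx d n) ℂ) (h : IsU x₀ M) :
    IsU x₀ (Es x₀ j * M) := by
  intro y y' z z' h1 h2
  rw [Es_mul, Es_mul, h1, h y y' z z' h1 h2]

lemma mul_Es_IsU (x₀ : Vx d n) (j : ℕ) (M : Matrix (Vx d n) (Vx d n) ℂ) (h : IsU x₀ M) :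
    IsU x₀ (M * Es x₀ j) := by
  intro y y' z z' h1 h2
  rw [mul_Es, mul_Es, h2, h y y' z z' h1 h2]

lemma comm_A_Es (x₀ : Vx d n) (i j : ℕ) :
    IsU x₀ (A d n i * Es x₀ j - Es x₀ j * A d n i) := by
  intro y y' z z' h1 h2
  have m1 := delta_max x₀ y z
  have m2 := delta_max x₀ y' z'
  simp only [Matrix.sub_apply, mul_Es, Es_mul, A, Matrix.of_apply]
  grind

lemma comm_Es_Es (x₀ : Vx d n) (i j : ℕ) :
    Es x₀ i * Es x₀ j = Es x₀ j * Es x₀ i := by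
  ext y z
  rw [mul_Es, Es_mul]
  simp only [Es, Matrix.of_apply]
  by_cases h : y = z
  · subst h; rfl
  · simp [h]

lemma comm_ext {R : Type*} [Ring R] [Algebra ℂ R] (S : Set R) (U : Submodule ℂ R)
    (hU : ∀ t ∈ Algebra.adjoin ℂ S, ∀ u ∈ U, t * u ∈ U ∧ u * t ∈ U) (s : R)
    (hs : ∀ t ∈ S, s * t - t * s ∈ U) :
    ∀ t ∈ Algebra.adjoin ℂ S, s * t - t * s ∈ U := by
  intro t ht
  induction ht using Algebra.adjoin_induction with
  | mem x hx => exact hs x hx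
  | algebraMap r => rw [Algebra.commutes]; simp
  | add a b _ _ ha hb =>
    have : s * (a + b) - (a + b) * s = (s * a - a * s) + (s * b - b * s) := by noncomm_ring
    rw [this]; exact U.add_mem ha hb
  | mul a b ha' hb' ha hb =>
    have : s * (a * b) - (a * b) * s = (s * a - a * s) * b + a * (s * b - b * s) := by
      noncomm_ring
    rw [this]; exact U.add_mem (hU b hb' _ ha).2 (hU a ha' _ hb).1

end aux

/-- `U` is a two-sided ideal of the Terwilliger algebra `T(x₀)`, and the
quotient `T(x₀)/U` is commutative: `S T - T S ∈ U` for all `S, T ∈ T(x₀)`. -/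
theorem stmt5 (d : ℕ) (hd : 1 ≤ d) (n : ℕ → ℕ) (hn : ∀ i < d, 2 ≤ n i)
    (x₀ : Vx d n) :
    (∀ t ∈ Ter x₀, ∀ u ∈ Uspan x₀, t * u ∈ Uspan x₀ ∧ u * t ∈ Uspan x₀) ∧
    (∀ s ∈ Ter x₀, ∀ t ∈ Ter x₀, s * t - t * s ∈ Uspan x₀) := by
  have hI : ∀ t ∈ Ter x₀, ∀ u ∈ Uspan x₀, t * u ∈ Uspan x₀ ∧ u * t ∈ Uspan x₀ := by
    intro t ht
    unfold Ter at ht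
    induction ht using Algebra.adjoin_induction with
    | mem x hx =>
      intro u hu
      have hu' := IsU_of_mem _ _ hu
      rcases hx with ⟨i, rfl⟩ | ⟨i, rfl⟩
      · exact ⟨mem_of_IsU hn _ _ (A_mul_IsU _ _ _ hu'), mem_of_IsU hn _ _ (mul_A_IsU _ _ _ hu')⟩
      · exact ⟨mem_of_IsU hn _ _ (Es_mul_IsU _ _ _ hu'), mem_of_IsU hn _ _ (mul_Es_IsU _ _ _ hu')⟩
    | algebraMap r =>
      intro u hu
      rw [← Algebra.commutes, ← Algebra.smul_def]
      exact ⟨Submodule.smul_mem _ _ hu, Submodule.smul_mem _ _ hu⟩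
    | add a b _ _ ha hb =>
      intro u hu
      rw [add_mul, mul_add]
      exact ⟨Submodule.add_mem _ (ha u hu).1 (hb u hu).1,
        Submodule.add_mem _ (ha u hu).2 (hb u hu).2⟩
    | mul a b _ _ ha hb =>
      intro u hu
      rw [mul_assoc, ← mul_assoc u]
      exact ⟨(ha _ (hb u hu).1).1, (hb _ (ha u hu).2).2⟩
  refine ⟨hI, fun s hs => ?_⟩
  refine comm_ext _ (Uspan x₀) hI s fun t ht => ?_
  rw [← neg_sub]
  refine Submodule.neg_mem _ ?_
  refine comm_ext _ (Uspan x₀) hI t (fun s hs => ?_) s hs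
  rcases ht with ⟨i, rfl⟩ | ⟨i, rfl⟩ <;> rcases hs with ⟨j, rfl⟩ | ⟨j, rfl⟩
  · simp only [A_comm (j : ℕ) (i : ℕ), sub_self]; exact Submodule.zero_mem _
  · exact mem_of_IsU hn _ _ (comm_A_Es _ _ _)
  · rw [← neg_sub]
    exact Submodule.neg_mem _ (mem_of_IsU hn _ _ (comm_A_Es _ _ _))
  · simp only [comm_Es_Es x₀ (j : ℕ) (i : ℕ), sub_self]; exact Submodule.zero_mem _
end

section
/- For every h ∈ {0,1,…,d}, the adjacency matrices of the wreath product satisfy (A_0 + A_1 + ⋯ + A_h)² = (k_0 + k_1 + ⋯ + k_h)(A_0 + A_1 + ⋯ + A_h). -/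
open Finset Matrix

theorem aux_delta_le {d : ℕ} {n : ℕ → ℕ} (x y : Vx d n) (h : ℕ) :
    delta x y ≤ h ↔ ∀ i : Fin d, h ≤ (i : ℕ) → x i = y i := by
  unfold delta
  rw [Finset.sup_le_iff]
  constructor
  · intro H i hi
    by_contra hne
    have := H i (by simp [hne])
    omega
  · intro H i hi
    have hne : x i ≠ y i := by simpa using hi
    by_contra hlt
    exact hne (H i (by omega))

theorem aux_sum_k (n : ℕ → ℕ) (h : ℕ) (hn : ∀ i < h, 1 ≤ n i) :
    ∑ i ∈ Finset.range (h + 1), k n i = ∏ j ∈ Finset.range h, n j := by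
  induction h with
  | zero => simp [k]
  | succ m ih =>
    rw [Finset.sum_range_succ, ih (fun i hi => hn i (by omega)), Finset.prod_range_succ]
    obtain ⟨t, ht⟩ := Nat.exists_eq_add_of_le (hn m (by omega))
    simp only [k, Nat.add_sub_cancel, ht]
    simp
    ring

theorem aux_card {d : ℕ} {n : ℕ → ℕ} (x : Vx d n) (h : ℕ) (hh : h ≤ d) :
    (Finset.univ.filter fun y : Vx d n => delta x y ≤ h).card = ∏ j ∈ Finset.range h, n j := by
  have e : (Finset.univ.filter fun y : Vx d n => delta x y ≤ h)
      = Fintype.piFinset (fun i : Fin d => if (i : ℕ) < h then Finset.univ else {x i}) := by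
    ext y
    simp only [Finset.mem_filter, Finset.mem_univ, true_and, Fintype.mem_piFinset, aux_delta_le]
    refine forall_congr' fun i => ?_
    split_ifs with hi
    · simp; omega
    · simp [eq_comm]; omega
  rw [e, Fintype.card_piFinset]
  have e2 : ∀ i : Fin d, (if (i : ℕ) < h then (Finset.univ : Finset (Fin (n i))) else {x i}).card
      = (fun j : ℕ => if j < h then n j else 1) i := by
    intro i
    dsimp only
    split_ifs <;> simp
  rw [Finset.prod_congr rfl (fun i _ => e2 i),
    Fin.prod_univ_eq_prod_range (fun j : ℕ => if j < h then n j else 1) d,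
    ← Finset.prod_subset (Finset.range_mono hh)]
  · exact Finset.prod_congr rfl (fun j hj => if_pos (Finset.mem_range.1 hj))
  · intro j _ hj
    exact if_neg (by simpa using hj)

theorem aux_S (d : ℕ) (n : ℕ → ℕ) (h : ℕ) (x y : Vx d n) :
    (∑ i ∈ Finset.range (h + 1), A d n i) x y = if delta x y ≤ h then 1 else 0 := by
  rw [Matrix.sum_apply]
  simp [A, Nat.lt_succ_iff]

/-- `(A 0 + A 1 + ⋯ + A h)² = (k 0 + k 1 + ⋯ + k h)(A 0 + A 1 + ⋯ + A h)`. -/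
theorem stmt8 (d : ℕ) (hd : 1 ≤ d) (n : ℕ → ℕ) (hn : ∀ i < d, 2 ≤ n i)
    (h : ℕ) (hh : h ≤ d) :
    (∑ i ∈ Finset.range (h + 1), A d n i) * (∑ i ∈ Finset.range (h + 1), A d n i)
      = (∑ i ∈ Finset.range (h + 1), (k n i : ℂ)) • (∑ i ∈ Finset.range (h + 1), A d n i) := by
  ext x z
  rw [Matrix.mul_apply, Matrix.smul_apply, ← Nat.cast_sum,
    aux_sum_k n h (fun i hi => by have := hn i (by omega); omega), ← aux_card x h hh]
  simp only [aux_S, smul_eq_mul, Finset.card_filter, Nat.cast_sum, Finset.sum_mul]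
  refine Finset.sum_congr rfl fun y _ => ?_
  by_cases hxy : delta x y ≤ h
  · have : delta y z ≤ h ↔ delta x z ≤ h := by
      rw [aux_delta_le] at *
      rw [aux_delta_le]
      exact forall_congr' fun i => imp_congr_right fun hi => by rw [hxy i hi]
    simp [hxy, this]
  · simp [hxy]
end

section
/- For all i, j ∈ {0,1,…,d} with i < j, one has E_i* A_j E_j* = E_i* J E_j*; and for every i ∈ {0,1,…,d}, one has E_i* J E_i* = E_i* (A_0 + A_1 + ⋯ + A_i) E_i*. -/
open Finset Matrix

theorem delta_comm_aux {d : ℕ} {n : ℕ → ℕ} (x y : Vx d n) : delta x y = delta y x := by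
  simp only [delta, ne_comm]

theorem delta_ultra_aux {d : ℕ} {n : ℕ → ℕ} (x y z : Vx d n) :
    delta x z ≤ max (delta x y) (delta y z) := by
  unfold delta
  apply Finset.sup_le
  intro i hi
  by_cases h : x i = y i
  · apply le_max_of_le_right
    refine Finset.le_sup (f := fun i : Fin d => (i : ℕ) + 1) ?_
    simp only [Finset.mem_filter, Finset.mem_univ, true_and] at hi ⊢
    rwa [← h]
  · apply le_max_of_le_left
    refine Finset.le_sup (f := fun i : Fin d => (i : ℕ) + 1) ?_
    simpa using h

theorem Es_mul_aux {d : ℕ} {n : ℕ → ℕ} (x₀ : Vx d n) (i j : ℕ)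
    (M : Matrix (Vx d n) (Vx d n) ℂ) (y z : Vx d n) :
    (Es x₀ i * M * Es x₀ j) y z =
      (if delta x₀ y = i then 1 else 0) * M y z * (if delta x₀ z = j then 1 else 0) := by
  have h : ∀ i, Es x₀ i = Matrix.diagonal (fun y => if delta x₀ y = i then (1 : ℂ) else 0) := by
    intro i
    ext a b
    by_cases hab : a = b
    · subst hab; simp [Es]
    · simp [Es, hab]
  rw [h, h, Matrix.mul_diagonal, Matrix.diagonal_mul]

/-- for `i < j ≤ d`, `E_i* A_j E_j* = E_i* J E_j*`; and for every `i ≤ d`,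
`E_i* J E_i* = E_i* (A 0 + A 1 + ⋯ + A i) E_i*`. -/
theorem stmt14 (d : ℕ) (hd : 1 ≤ d) (n : ℕ → ℕ) (hn : ∀ i < d, 2 ≤ n i)
    (x₀ : Vx d n) :
    (∀ i j : ℕ, i < j → j ≤ d →
      Es x₀ i * A d n j * Es x₀ j = Es x₀ i * Jm d n * Es x₀ j) ∧
    (∀ i : ℕ, i ≤ d →
      Es x₀ i * Jm d n * Es x₀ i
        = Es x₀ i * (∑ j ∈ Finset.range (i + 1), A d n j) * Es x₀ i) := by
  constructor
  · intro i j hij _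
    ext y z
    rw [Es_mul_aux, Es_mul_aux]
    by_cases hy : delta x₀ y = i
    · by_cases hz : delta x₀ z = j
      · have h1 := delta_ultra_aux y x₀ z
        have h2 := delta_ultra_aux x₀ y z
        rw [delta_comm_aux y x₀] at h1
        have : delta y z = j := by
          rw [hy, hz] at h1 h2
          omega
        simp [A, Jm, this]
      · simp [hz]
    · simp [hy]
  · intro i _
    ext y z
    rw [Es_mul_aux, Es_mul_aux]
    by_cases hy : delta x₀ y = i
    · by_cases hz : delta x₀ z = i
      · have h1 := delta_ultra_aux y x₀ z
        rw [delta_comm_aux y x₀, hy, hz] at h1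
        have : delta y z < i + 1 := by omega
        simp [A, Jm, Matrix.sum_apply, -Order.lt_add_one_iff, this]
      · simp [hz]
    · simp [hy]
end
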